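/- Let μ, ν be probability measures on ℝ^d with finite first moments. Then W₁(μ,ν) = sup{ ∫ f d(μ−ν) : f : ℝ^d → ℝ with Lipschitz constant at most 1 and f integrable w.r.t. |μ−ν| }. -/

import Mathlib

open MeasureTheory

/-- The `p`-Wasserstein distance, defined as the infimum over couplings of the `p`-th root of
the `p`-th cost. -/
noncomputable def Wp {d : ℕ} (p : ℝ)
    (μ ν : Measure (EuclideanSpace ℝ (Fin d))) : ℝ :=
  sInf {c : ℝ | ∃ γ : Measure (EuclideanSpace ℝ (Fin d) × EuclideanSpace ℝ (Fin d)),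
    IsProbabilityMeasure γ ∧ γ.map Prod.fst = μ ∧ γ.map Prod.snd = ν ∧
    c = (∫ z, ‖z.1 - z.2‖ ^ p ∂γ) ^ (1 / p)}

open Filter Topology BoundedContinuousFunction CompactlySupported
open scoped ENNReal NNReal

theorem totalVariation_sub_le {α : Type*} [MeasurableSpace α] (μ ν : Measure α)
    [IsFiniteMeasure μ] [IsFiniteMeasure ν] :
    (μ.toSignedMeasure - ν.toSignedMeasure).totalVariation ≤ μ + ν := by
  rw [SignedMeasure.totalVariation_eq_variation]
  exact VectorMeasure.variation_sub_le.trans (by simp)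

theorem LipschitzWith.integrable_of_integrable_norm {X : Type*} [NormedAddCommGroup X]
    [MeasurableSpace X] [BorelSpace X] {μ : Measure X} [IsFiniteMeasure μ]
    {K : ℝ≥0} {f : X → ℝ} (hf : LipschitzWith K f) (hμ : Integrable (fun x => ‖x‖) μ) :
    Integrable f μ := by
  refine Integrable.mono' ((integrable_const ‖f 0‖).add (hμ.const_mul K))
    hf.continuous.measurable.aestronglyMeasurable (ae_of_all _ fun x => ?_)
  have h := hf.norm_sub_le x 0
  have h' := norm_le_norm_add_norm_sub' (f x) (f 0)
  simp only [sub_zero] at h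
  simp only [Pi.add_apply]
  linarith

/-- The dual constraint `0 ≤ φ x + ψ y + t * dist x y` passes to integrals: the infimal
convolution `x ↦ ⨅ y, ψ y + t * dist x y` is a `t`-Lipschitz function between `-φ` and `ψ`. -/
theorem nonneg_of_forall_add_add_mul_dist_nonneg {X : Type*} [NormedAddCommGroup X]
    [MeasurableSpace X] [BorelSpace X] {μ ν : Measure X}
    [IsProbabilityMeasure μ] [IsProbabilityMeasure ν]
    (hμ : Integrable (fun x => ‖x‖) μ) (hν : Integrable (fun x => ‖x‖) ν) {S : ℝ}
    (hS : ∀ f : X → ℝ, LipschitzWith 1 f → (∫ x, f x ∂μ) - ∫ x, f x ∂ν ≤ S)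
    (φ ψ : X →ᵇ ℝ) {t : ℝ} (ht : 0 ≤ t) (h : ∀ x y, 0 ≤ φ x + ψ y + t * dist x y) :
    0 ≤ (∫ x, φ x ∂μ) + (∫ x, ψ x ∂ν) + t * S := by
  set f : X → ℝ := fun x => ⨅ y, (ψ y + t * dist x y) with hf
  have hbdd (x : X) : BddBelow (Set.range fun y => ψ y + t * dist x y) :=
    ⟨-φ x, by rintro _ ⟨y, rfl⟩; linarith [h x y]⟩
  have hfψ (x : X) : f x ≤ ψ x := (ciInf_le (hbdd x) x).trans (by simp)
  have hφf (x : X) : -φ x ≤ f x := le_ciInf fun y => by linarith [h x y]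
  have hfle (x y : X) : f x ≤ f y + t * dist x y := by
    rw [← sub_le_iff_le_add]
    refine le_ciInf fun z => ?_
    have h1 : f x ≤ ψ z + t * dist x z := ciInf_le (hbdd x) z
    nlinarith [dist_triangle x y z]
  have hlip : LipschitzWith ⟨t, ht⟩ f := LipschitzWith.of_le_add_mul _ hfle
  have hfμ := hlip.integrable_of_integrable_norm hμ
  have hfν := hlip.integrable_of_integrable_norm hν
  have h1 : ∫ x, f x ∂ν ≤ ∫ x, ψ x ∂ν := integral_mono hfν (ψ.integrable ν) hfψ
  have h2 : ∫ x, -φ x ∂μ ≤ ∫ x, f x ∂μ := integral_mono (φ.integrable μ).neg hfμ hφf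
  rw [integral_neg] at h2
  suffices (∫ x, f x ∂μ) - ∫ x, f x ∂ν ≤ t * S by linarith
  rcases ht.eq_or_lt with rfl | ht
  · have hc (x : X) : f x = f 0 :=
      le_antisymm (by simpa using hfle x 0) (by simpa using hfle 0 x)
    rw [funext hc]
    simp
  · have := hS (fun x => t⁻¹ * f x) (LipschitzWith.of_le_add fun x y => by
      have := mul_le_mul_of_nonneg_left (hfle x y) (inv_nonneg.2 ht.le)
      rwa [mul_add, inv_mul_cancel_left₀ ht.ne'] at this)
    rw [integral_const_mul, integral_const_mul, ← mul_sub, inv_mul_le_iff₀ ht] at this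
    exact this

/-- A finitely additive coupling of cost at most `S`, given by the M. Riesz extension theorem. -/
theorem exists_positive_functional {X : Type*} [NormedAddCommGroup X]
    [MeasurableSpace X] [BorelSpace X] {μ ν : Measure X}
    [IsProbabilityMeasure μ] [IsProbabilityMeasure ν]
    (hμ : Integrable (fun x => ‖x‖) μ) (hν : Integrable (fun x => ‖x‖) ν) {S : ℝ}
    (hS : ∀ f : X → ℝ, LipschitzWith 1 f → (∫ x, f x ∂μ) - ∫ x, f x ∂ν ≤ S) :
    ∃ Λ : (X × X →ᵇ ℝ) →ₗ[ℝ] ℝ, (∀ h, 0 ≤ h → 0 ≤ Λ h) ∧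
      (∀ φ : X →ᵇ ℝ, Λ (φ.compContinuous ⟨Prod.fst, continuous_fst⟩) = ∫ x, φ x ∂μ) ∧
      (∀ φ : X →ᵇ ℝ, Λ (φ.compContinuous ⟨Prod.snd, continuous_snd⟩) = ∫ x, φ x ∂ν) ∧
      ∀ h : X × X →ᵇ ℝ, (∀ z, h z ≤ dist z.1 z.2) → Λ h ≤ S := by
  let s : PointedCone ℝ
      ((X →ᵇ ℝ) × (X →ᵇ ℝ) × ℝ × (X × X →ᵇ ℝ)) :=
    { carrier := {e | 0 ≤ e.2.2.1 ∧
        ∀ x y, 0 ≤ e.1 x + e.2.1 y + e.2.2.1 * dist x y + e.2.2.2 (x, y)}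
      add_mem' := by
        rintro a b ⟨ha, ha'⟩ ⟨hb, hb'⟩
        refine ⟨add_nonneg ha hb, fun x y => ?_⟩
        have := add_nonneg (ha' x y) (hb' x y)
        simp only [Prod.fst_add, Prod.snd_add, BoundedContinuousFunction.add_apply]
        linarith
      zero_mem' := by simp
      smul_mem' := by
        rintro ⟨c, hc⟩ a ⟨ha, ha'⟩
        refine ⟨mul_nonneg hc ha, fun x y => ?_⟩
        have := mul_nonneg hc (ha' x y)
        change 0 ≤ c * a.1 x + c * a.2.1 y + (c * a.2.2.1) * dist x y + c * a.2.2.2 (x, y)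
        linarith }
  have hs (φ ψ : X →ᵇ ℝ) (t : ℝ) (h : X × X →ᵇ ℝ) : (φ, ψ, t, h) ∈ s ↔
    0 ≤ t ∧ ∀ x y, 0 ≤ φ x + ψ y + t * dist x y + h (x, y) := Iff.rfl
  let F : ((X →ᵇ ℝ) × (X →ᵇ ℝ) × ℝ × (X × X →ᵇ ℝ)) →ₗ[ℝ] ℝ :=
    { toFun := fun e => (∫ x, e.1 x ∂μ) + (∫ x, e.2.1 x ∂ν) + e.2.2.1 * S
      map_add' := fun a b => by
        simp only [Prod.fst_add, Prod.snd_add, BoundedContinuousFunction.add_apply]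
        rw [integral_add (a.1.integrable μ) (b.1.integrable μ),
          integral_add (a.2.1.integrable ν) (b.2.1.integrable ν)]
        ring
      map_smul' := fun c a => by
        simp only [Prod.smul_fst, Prod.smul_snd, BoundedContinuousFunction.smul_apply,
          smul_eq_mul, integral_const_mul, RingHom.id_apply]
        ring }
  let D : Submodule ℝ
      ((X →ᵇ ℝ) × (X →ᵇ ℝ) × ℝ × (X × X →ᵇ ℝ)) := LinearMap.ker ((LinearMap.snd ℝ ℝ (X × X →ᵇ ℝ)) ∘ₗ
    (LinearMap.snd ℝ (X →ᵇ ℝ) _) ∘ₗ (LinearMap.snd ℝ (X →ᵇ ℝ) _))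
  have hD (φ ψ : X →ᵇ ℝ) (t : ℝ) : (φ, ψ, t, 0) ∈ D := by simp [D]
  obtain ⟨g, hgF, hgs⟩ := riesz_extension s (F.toPMap D) (by
      rintro ⟨⟨φ, ψ, t, h⟩, hx⟩ hxs
      obtain rfl : h = 0 := by simpa [D] using hx
      obtain ⟨ht, hxs⟩ := (hs _ _ _ _).1 hxs
      exact nonneg_of_forall_add_add_mul_dist_nonneg hμ hν hS φ ψ ht (by simpa using hxs)) (by
      rintro ⟨φ, ψ, t, h⟩
      refine ⟨⟨(BoundedContinuousFunction.const X ‖h‖ - φ, -ψ, |t| - t, 0), hD _ _ _⟩, ?_⟩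
      change (_, _, _, _) ∈ s
      refine (hs _ _ _ _).2 ⟨by simp, fun x y => ?_⟩
      have := h.neg_norm_le_apply (x, y)
      have := mul_nonneg (abs_nonneg t) (dist_nonneg (x := x) (y := y))
      simp
      linarith)
  have hg (φ ψ : X →ᵇ ℝ) (t : ℝ) :
      g (φ, ψ, t, 0) = (∫ x, φ x ∂μ) + (∫ x, ψ x ∂ν) + t * S := hgF ⟨_, hD φ ψ t⟩
  have hsplit (φ ψ : X →ᵇ ℝ) (t : ℝ) (h : X × X →ᵇ ℝ) :
      g (φ, ψ, t, h) = (∫ x, φ x ∂μ) + (∫ x, ψ x ∂ν) + t * S + g (0, 0, 0, h) := by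
    rw [← hg, ← map_add]
    simp
  have hneg (h : X × X →ᵇ ℝ) : g (0, 0, 0, -h) = - g (0, 0, 0, h) := by
    rw [← map_neg]
    simp
  have key (φ ψ : X →ᵇ ℝ) (t : ℝ) (h : X × X →ᵇ ℝ) (ht : 0 ≤ t)
      (hh : ∀ x y, h (x, y) ≤ φ x + ψ y + t * dist x y) :
      g (0, 0, 0, h) ≤ (∫ x, φ x ∂μ) + (∫ x, ψ x ∂ν) + t * S := by
    have := hgs (φ, ψ, t, -h) ((hs _ _ _ _).2 ⟨ht, fun x y => by
      have := hh x y
      simp only [BoundedContinuousFunction.neg_apply]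
      linarith⟩)
    rw [hsplit, hneg] at this
    linarith
  let Λ : (X × X →ᵇ ℝ) →ₗ[ℝ] ℝ := g ∘ₗ LinearMap.inr ℝ (X →ᵇ ℝ) _ ∘ₗ
    LinearMap.inr ℝ (X →ᵇ ℝ) _ ∘ₗ LinearMap.inr ℝ ℝ _
  have hΛ (h) : Λ h = g (0, 0, 0, h) := rfl
  refine ⟨Λ, fun h hh => ?_, fun φ => ?_, fun φ => ?_, fun h hh => ?_⟩
  · exact hgs _ ((hs _ _ _ _).2 ⟨le_rfl, fun x y => by simpa using hh (x, y)⟩)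
  · apply le_antisymm
    · simpa [hΛ] using key φ 0 0 (φ.compContinuous ⟨Prod.fst, continuous_fst⟩) le_rfl (by simp)
    · have := key (-φ) 0 0 (-φ.compContinuous ⟨Prod.fst, continuous_fst⟩) le_rfl (by simp)
      rw [hneg] at this
      simpa [hΛ, integral_neg] using this
  · apply le_antisymm
    · simpa [hΛ] using key 0 φ 0 (φ.compContinuous ⟨Prod.snd, continuous_snd⟩) le_rfl (by simp)
    · have := key 0 (-φ) 0 (-φ.compContinuous ⟨Prod.snd, continuous_snd⟩) le_rfl (by simp)
      rw [hneg] at this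
      simpa [hΛ, integral_neg] using this
  · simpa [hΛ] using key 0 0 1 h zero_le_one (by simpa using hh)

/-- A continuous cutoff: `1` on the ball of radius `n`, and `0` off the ball of radius `n + 1`. -/
noncomputable def cutoff (X : Type*) [NormedAddCommGroup X] (n : ℕ) : X →ᵇ ℝ :=
  BoundedContinuousFunction.ofNormedAddCommGroup (fun x => max 0 (min 1 (n + 1 - ‖x‖)))
    (by fun_prop) 1 fun x => by
      rw [Real.norm_of_nonneg (le_max_left _ _)]
      exact max_le zero_le_one (min_le_left _ _)

section cutoff

variable {X : Type*} [NormedAddCommGroup X]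

theorem cutoff_apply (n : ℕ) (x : X) : cutoff X n x = max 0 (min 1 (n + 1 - ‖x‖)) := rfl

theorem cutoff_nonneg (n : ℕ) (x : X) : 0 ≤ cutoff X n x := le_max_left _ _

theorem cutoff_le_one (n : ℕ) (x : X) : cutoff X n x ≤ 1 :=
  max_le zero_le_one (min_le_left _ _)

theorem hasCompactSupport_cutoff [ProperSpace X] (n : ℕ) : HasCompactSupport (cutoff X n) := by
  refine HasCompactSupport.intro (isCompact_closedBall (0 : X) (n + 1)) fun x hx => ?_
  rw [mem_closedBall_zero_iff, not_le] at hx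
  rw [cutoff_apply, max_eq_left]
  exact (min_le_right _ _).trans (by linarith)

theorem tendsto_cutoff (x : X) : Tendsto (fun n => cutoff X n x) atTop (𝓝 1) := by
  obtain ⟨N, hN⟩ := exists_nat_ge ‖x‖
  refine tendsto_const_nhds.congr' ?_
  filter_upwards [eventually_ge_atTop N] with n hn
  have : (N : ℝ) ≤ n := by exact_mod_cast hn
  rw [cutoff_apply, min_eq_left (by linarith), max_eq_right zero_le_one]

theorem tendsto_integral_mul_cutoff [MeasurableSpace X] [OpensMeasurableSpace X]
    [SecondCountableTopology X] (γ : Measure X) [IsFiniteMeasure γ] (g : X →ᵇ ℝ) :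
    Tendsto (fun n => ∫ x, (g * cutoff X n) x ∂γ) atTop (𝓝 (∫ x, g x ∂γ)) := by
  refine tendsto_integral_of_dominated_convergence (fun _ => ‖g‖)
    (fun n => (g * cutoff X n).continuous.aestronglyMeasurable) (integrable_const _)
    (fun n => ae_of_all _ fun x => ?_) (ae_of_all _ fun x => ?_)
  · rw [BoundedContinuousFunction.mul_apply, norm_mul, Real.norm_of_nonneg (cutoff_nonneg n x)]
    exact (mul_le_of_le_one_right (norm_nonneg _) (cutoff_le_one n x)).trans (g.norm_coe_le_norm x)
  · simpa using (tendsto_cutoff x).const_mul (g x)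

theorem one_sub_cutoff_prod_le {Y : Type*} [NormedAddCommGroup Y] (n : ℕ) (z : X × Y) :
    1 - cutoff (X × Y) n z ≤ (1 - cutoff X n z.1) + (1 - cutoff Y n z.2) := by
  rcases le_total ‖z.1‖ ‖z.2‖ with h | h
  · have : cutoff (X × Y) n z = cutoff Y n z.2 := by
      rw [cutoff_apply, cutoff_apply, Prod.norm_def, max_eq_right h]
    linarith [cutoff_le_one n z.1]
  · have : cutoff (X × Y) n z = cutoff X n z.1 := by
      rw [cutoff_apply, cutoff_apply, Prod.norm_def, max_eq_left h]
    linarith [cutoff_le_one n z.2]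

end cutoff

/-- A positive functional on bounded continuous functions that does not charge infinity is
integration against a finite measure. -/
theorem exists_measure_of_tendsto_cutoff {Z : Type*} [NormedAddCommGroup Z] [ProperSpace Z]
    [MeasurableSpace Z] [BorelSpace Z] (Λ : (Z →ᵇ ℝ) →ₗ[ℝ] ℝ) (hpos : ∀ h, 0 ≤ h → 0 ≤ Λ h)
    (htight : Tendsto (fun n => Λ (1 - cutoff Z n)) atTop (𝓝 0)) :
    ∃ γ : Measure Z, IsFiniteMeasure γ ∧ ∀ g : Z →ᵇ ℝ, ∫ z, g z ∂γ = Λ g := by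
  have hmono {a b : Z →ᵇ ℝ} (hab : a ≤ b) : Λ a ≤ Λ b := by
    have := hpos (b - a) (sub_nonneg.2 hab)
    rwa [map_sub, sub_nonneg] at this
  let L : C_c(Z, ℝ) →ₗ[ℝ] ℝ :=
    { toFun := fun f => Λ f.toBoundedContinuousFunction
      map_add' := fun f g => by rw [← map_add]; rfl
      map_smul' := fun c f => by rw [RingHom.id_apply, ← map_smul]; rfl }
  let γ := RealRMK.rieszMeasure (PositiveLinearMap.mk₀ L fun f hf => hpos _ fun z => hf z)
  have hγ (f : Z →ᵇ ℝ) (hf : HasCompactSupport f) : ∫ z, f z ∂γ = Λ f :=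
    RealRMK.integral_rieszMeasure _ (⟨f.toContinuousMap, hf⟩ : C_c(Z, ℝ))
  have hcpt (g : Z →ᵇ ℝ) (n : ℕ) : HasCompactSupport (g * cutoff Z n : Z →ᵇ ℝ) := by
    rw [BoundedContinuousFunction.coe_mul]
    exact (hasCompactSupport_cutoff n).mul_left
  have hfin : γ Set.univ ≤ ENNReal.ofReal (Λ 1) := by
    calc γ Set.univ = ∫⁻ z, 1 ∂γ := by simp
      _ = ∫⁻ z, liminf (fun n => ENNReal.ofReal (cutoff Z n z)) atTop ∂γ := by
        refine lintegral_congr fun z => ?_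
        have := (ENNReal.continuous_ofReal.tendsto 1).comp (tendsto_cutoff z)
        rw [ENNReal.ofReal_one] at this
        exact this.liminf_eq.symm
      _ ≤ liminf (fun n => ∫⁻ z, ENNReal.ofReal (cutoff Z n z) ∂γ) atTop :=
        lintegral_liminf_le fun n => (cutoff Z n).continuous.measurable.ennreal_ofReal
      _ ≤ ENNReal.ofReal (Λ 1) := by
        refine liminf_le_of_frequently_le' (Frequently.of_forall fun n => ?_)
        rw [← ofReal_integral_eq_lintegral_ofReal
          ((cutoff Z n).continuous.integrable_of_hasCompactSupport (hasCompactSupport_cutoff n))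
          (ae_of_all _ (cutoff_nonneg n)), hγ _ (hasCompactSupport_cutoff n)]
        exact ENNReal.ofReal_le_ofReal (hmono fun z => cutoff_le_one n z)
  have : IsFiniteMeasure γ := ⟨hfin.trans_lt ENNReal.ofReal_lt_top⟩
  refine ⟨γ, this, fun g => ?_⟩
  refine tendsto_nhds_unique (tendsto_integral_mul_cutoff γ g) ?_
  have hbound (n : ℕ) : ‖Λ (g * cutoff Z n) - Λ g‖ ≤ ‖g‖ * Λ (1 - cutoff Z n) := by
    rw [Real.norm_eq_abs, abs_le, ← smul_eq_mul, ← map_smul, ← map_neg, ← map_sub]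
    constructor <;> refine hmono fun z => ?_
    all_goals
      have h1 := g.neg_norm_le_apply z
      have h2 := g.apply_le_norm z
      have h3 := cutoff_le_one n z
      simp
      nlinarith
  rw [tendsto_iff_norm_sub_tendsto_zero]
  refine squeeze_zero (fun n => norm_nonneg _) (fun n => ?_)
    ((htight.const_mul ‖g‖).trans (by rw [mul_zero]))
  rw [hγ _ (hcpt g n)]
  exact hbound n

/-- Strong duality: some coupling has cost at most any bound for the dual problem. -/
theorem exists_coupling_lintegral_dist_le {X : Type*} [NormedAddCommGroup X] [ProperSpace X]
    [MeasurableSpace X] [BorelSpace X] {μ ν : Measure X}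
    [IsProbabilityMeasure μ] [IsProbabilityMeasure ν]
    (hμ : Integrable (fun x => ‖x‖) μ) (hν : Integrable (fun x => ‖x‖) ν) {S : ℝ}
    (hS : ∀ f : X → ℝ, LipschitzWith 1 f → (∫ x, f x ∂μ) - ∫ x, f x ∂ν ≤ S) :
    ∃ γ : Measure (X × X), γ.map Prod.fst = μ ∧ γ.map Prod.snd = ν ∧
      ∫⁻ z, ENNReal.ofReal (dist z.1 z.2) ∂γ ≤ ENNReal.ofReal S := by
  obtain ⟨Λ, hpos, hfst, hsnd, hcost⟩ := exists_positive_functional hμ hν hS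
  have htail (m : Measure X) [IsProbabilityMeasure m] :
      Tendsto (fun n => ∫ x, (1 - cutoff X n) x ∂m) atTop (𝓝 0) := by
    have h := (tendsto_integral_mul_cutoff m 1).const_sub 1
    simp only [one_mul, BoundedContinuousFunction.coe_one, Pi.one_apply, integral_const,
      probReal_univ, smul_eq_mul, mul_one, sub_self] at h
    refine h.congr fun n => ?_
    simp only [BoundedContinuousFunction.sub_apply, BoundedContinuousFunction.coe_one,
      Pi.one_apply]
    rw [integral_sub (integrable_const _) ((cutoff X n).integrable m)]
    simp
  have htight : Tendsto (fun n => Λ (1 - cutoff (X × X) n)) atTop (𝓝 0) := by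
    refine squeeze_zero (fun n => hpos _ fun z => sub_nonneg.2 (cutoff_le_one n z)) (fun n => ?_)
      (((htail μ).add (htail ν)).trans (by rw [add_zero]))
    rw [← hfst, ← hsnd, ← map_add, ← sub_nonneg, ← map_sub]
    exact hpos _ fun z => sub_nonneg.2 (one_sub_cutoff_prod_le n z)
  obtain ⟨γ, hγfin, hγ⟩ := exists_measure_of_tendsto_cutoff Λ hpos htight
  refine ⟨γ, ?_, ?_, ?_⟩
  · refine ext_of_forall_integral_eq_of_IsFiniteMeasure fun φ => ?_
    rw [← hfst, ← hγ, integral_map measurable_fst.aemeasurable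
      φ.continuous.aestronglyMeasurable]
    rfl
  · refine ext_of_forall_integral_eq_of_IsFiniteMeasure fun φ => ?_
    rw [← hsnd, ← hγ, integral_map measurable_snd.aemeasurable
      φ.continuous.aestronglyMeasurable]
    rfl
  · let c (n : ℕ) : X × X →ᵇ ℝ :=
      BoundedContinuousFunction.ofNormedAddCommGroup (fun z => min (dist z.1 z.2) n)
        (by fun_prop) n fun z => by
          rw [Real.norm_of_nonneg (le_min dist_nonneg n.cast_nonneg)]
          exact min_le_right _ _
    have hc (n : ℕ) (z : X × X) : c n z = min (dist z.1 z.2) n := rfl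
    have hclim (z : X × X) : Tendsto (fun n => c n z) atTop (𝓝 (dist z.1 z.2)) := by
      obtain ⟨N, hN⟩ := exists_nat_ge (dist z.1 z.2)
      refine tendsto_const_nhds.congr' ?_
      filter_upwards [eventually_ge_atTop N] with n hn
      rw [hc, min_eq_left (hN.trans (by exact_mod_cast hn))]
    calc ∫⁻ z, ENNReal.ofReal (dist z.1 z.2) ∂γ
        = ∫⁻ z, liminf (fun n => ENNReal.ofReal (c n z)) atTop ∂γ :=
          lintegral_congr fun z =>
            ((ENNReal.continuous_ofReal.tendsto _).comp (hclim z)).liminf_eq.symm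
      _ ≤ liminf (fun n => ∫⁻ z, ENNReal.ofReal (c n z) ∂γ) atTop :=
        lintegral_liminf_le fun n => (c n).continuous.measurable.ennreal_ofReal
      _ ≤ ENNReal.ofReal S := by
        refine liminf_le_of_frequently_le' (Frequently.of_forall fun n => ?_)
        rw [← ofReal_integral_eq_lintegral_ofReal ((c n).integrable γ)
          (ae_of_all _ fun z => le_min dist_nonneg n.cast_nonneg), hγ]
        exact ENNReal.ofReal_le_ofReal (hcost _ fun z => min_le_left _ _)

/-- Weak duality. -/
theorem integral_sub_integral_le_of_coupling {X : Type*} [NormedAddCommGroup X]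
    [SecondCountableTopology X] [MeasurableSpace X] [BorelSpace X] {μ ν : Measure X}
    [IsFiniteMeasure μ] [IsFiniteMeasure ν]
    (hμ : Integrable (fun x => ‖x‖) μ) (hν : Integrable (fun x => ‖x‖) ν)
    {γ : Measure (X × X)} (hfst : γ.map Prod.fst = μ) (hsnd : γ.map Prod.snd = ν)
    {f : X → ℝ} (hf : LipschitzWith 1 f) :
    (∫ x, f x ∂μ) - ∫ x, f x ∂ν ≤ ∫ z, ‖z.1 - z.2‖ ∂γ := by
  have hfμ := hf.integrable_of_integrable_norm hμ
  have hfν := hf.integrable_of_integrable_norm hν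
  subst hfst hsnd
  have h1 := hμ.comp_measurable measurable_fst
  have h2 := hν.comp_measurable measurable_snd
  have hf1 : Integrable (fun z : X × X => f z.1) γ := hfμ.comp_measurable measurable_fst
  have hf2 : Integrable (fun z : X × X => f z.2) γ := hfν.comp_measurable measurable_snd
  rw [integral_map measurable_fst.aemeasurable hfμ.aestronglyMeasurable,
    integral_map measurable_snd.aemeasurable hfν.aestronglyMeasurable,
    ← integral_sub hf1 hf2]
  refine integral_mono (hf1.sub hf2) ?_ fun z => ?_
  · refine (h1.add h2).mono' (by fun_prop) (ae_of_all _ fun z => ?_)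
    simpa using norm_sub_le z.1 z.2
  · simpa using (le_abs_self _).trans (hf.norm_sub_le z.1 z.2)

theorem stmt19 (d : ℕ) (μ ν : Measure (EuclideanSpace ℝ (Fin d)))
    [IsProbabilityMeasure μ] [IsProbabilityMeasure ν]
    (hmμ : ∫⁻ x, ENNReal.ofReal ‖x‖ ∂μ ≠ ⊤)
    (hmν : ∫⁻ x, ENNReal.ofReal ‖x‖ ∂ν ≠ ⊤) :
    Wp 1 μ ν = sSup {r : ℝ | ∃ f : EuclideanSpace ℝ (Fin d) → ℝ,
      LipschitzWith 1 f ∧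
      Integrable f ((μ.toSignedMeasure - ν.toSignedMeasure).totalVariation) ∧
      r = (∫ x, f x ∂μ) - ∫ x, f x ∂ν} := by
  have hμ : Integrable (fun x => ‖x‖) μ :=
    ⟨by fun_prop, (hasFiniteIntegral_iff_ofReal (ae_of_all _ norm_nonneg)).2 hmμ.lt_top⟩
  have hν : Integrable (fun x => ‖x‖) ν :=
    ⟨by fun_prop, (hasFiniteIntegral_iff_ofReal (ae_of_all _ norm_nonneg)).2 hmν.lt_top⟩
  set R : Set ℝ := {r : ℝ | ∃ f : EuclideanSpace ℝ (Fin d) → ℝ,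
      LipschitzWith 1 f ∧
      Integrable f ((μ.toSignedMeasure - ν.toSignedMeasure).totalVariation) ∧
      r = (∫ x, f x ∂μ) - ∫ x, f x ∂ν}
  have hR (f : EuclideanSpace ℝ (Fin d) → ℝ) (hf : LipschitzWith 1 f) :
      (∫ x, f x ∂μ) - ∫ x, f x ∂ν ∈ R :=
    ⟨f, hf, ((hf.integrable_of_integrable_norm hμ).add_measure
      (hf.integrable_of_integrable_norm hν)).mono_measure (totalVariation_sub_le μ ν), rfl⟩
  have h0 : (0 : ℝ) ∈ R := by simpa using hR (fun _ => 0) (LipschitzWith.const' 0)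
  have hle {γ : Measure (EuclideanSpace ℝ (Fin d) × EuclideanSpace ℝ (Fin d))}
      (hfst : γ.map Prod.fst = μ) (hsnd : γ.map Prod.snd = ν) :
      ∀ r ∈ R, r ≤ ∫ z, ‖z.1 - z.2‖ ∂γ := by
    rintro _ ⟨f, hf, -, rfl⟩
    exact integral_sub_integral_le_of_coupling hμ hν hfst hsnd hf
  have hbdd : BddAbove R := ⟨_, hle (γ := μ.prod ν) (by simp) (by simp)⟩
  obtain ⟨γ, hfst, hsnd, hγ⟩ := exists_coupling_lintegral_dist_le hμ hν
    fun f hf => le_csSup hbdd (hR f hf)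
  have hprob : IsProbabilityMeasure γ :=
    (Measure.isProbabilityMeasure_map_iff measurable_fst.aemeasurable).1 (hfst ▸ inferInstance)
  unfold Wp
  simp only [Real.rpow_one, div_one]
  refine IsLeast.csInf_eq ⟨⟨γ, hprob, hfst, hsnd,
    le_antisymm (csSup_le ⟨0, h0⟩ (hle hfst hsnd)) ?_⟩, ?_⟩
  · rw [integral_eq_lintegral_of_nonneg_ae (ae_of_all _ fun _ => norm_nonneg _) (by fun_prop)]
    simp only [← dist_eq_norm]
    exact ENNReal.toReal_le_of_le_ofReal (le_csSup hbdd h0) hγ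
  · rintro _ ⟨γ', -, hfst', hsnd', rfl⟩
    exact csSup_le ⟨0, h0⟩ (hle hfst' hsnd')
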